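/- The maximum, over all Boolean functions f: F_2^4 → F_2 of algebraic degree exactly 2, of the largest integer N ∈ {4,…,20} such that the function f*: F_2^n → F_2 given by the CA-based construction is semi-bent for every n with 4 ≤ n ≤ N, equals 8. In particular, there is no 4-variable Boolean function of algebraic degree 2 for which f* is semi-bent for all n with 4 ≤ n ≤ 20. -/

import Mathlib

/-- The CA-based construction: given a local rule `f` of `m` variables and `n ≥ m`,
the `n`-variable function `f*` is the XOR of all output cells of the no-boundary CA. -/
def caStar (m n : ℕ) (h : m ≤ n) (f : (Fin m → ZMod 2) → ZMod 2) :
    (Fin n → ZMod 2) → ZMod 2 :=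
  fun x => ∑ i : Fin (n - m + 1),
    f (fun j => x ⟨i.val + j.val, by have hi := i.isLt; have hj := j.isLt; omega⟩)

/-- The ANF coefficient `a_I` of a Boolean function, via the Möbius transform:
`a_I = ⊕_{x : supp(x) ⊆ I} f(x)`. -/
def anf {n : ℕ} (f : (Fin n → ZMod 2) → ZMod 2) (I : Finset (Fin n)) : ZMod 2 :=
  ∑ x ∈ Finset.univ.filter (fun x : Fin n → ZMod 2 => ∀ i, x i = 1 → i ∈ I), f x

/-- The algebraic degree of a Boolean function: `max {|I| : a_I ≠ 0}` (0 for the zero function). -/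
def algDegree {n : ℕ} (f : (Fin n → ZMod 2) → ZMod 2) : ℕ :=
  (Finset.univ.filter fun I : Finset (Fin n) => anf f I ≠ 0).sup Finset.card

/-- The Walsh transform `W_f(a) = Σ_x (-1)^(f(x) ⊕ a·x)`. -/
def walsh {n : ℕ} (f : (Fin n → ZMod 2) → ZMod 2) (a : Fin n → ZMod 2) : ℤ :=
  ∑ x : Fin n → ZMod 2, (-1 : ℤ) ^ (f x + ∑ i, a i * x i).val

/-- The semi-bent value `λ`: `2^((n+1)/2)` for odd `n`, `2^((n+2)/2)` for even `n`. -/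
def sbLambda (n : ℕ) : ℤ := if Odd n then 2 ^ ((n + 1) / 2) else 2 ^ ((n + 2) / 2)

/-- A Boolean function is semi-bent if its Walsh transform takes only the values `0, λ, -λ`. -/
def semiBent {n : ℕ} (f : (Fin n → ZMod 2) → ZMod 2) : Prop :=
  ∀ a, walsh f a = 0 ∨ walsh f a = sbLambda n ∨ walsh f a = -sbLambda n

/-- A Boolean function is balanced if it takes the value 1 exactly `2^(n-1)` times. -/
def balanced {n : ℕ} (f : (Fin n → ZMod 2) → ZMod 2) : Prop :=
  (Finset.univ.filter fun x => f x = 1).card = 2 ^ (n - 1)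

/-- `b` is a linear structure of `g` if the derivative `D_b g(x) = g(x) ⊕ g(x ⊕ b)` is constant. -/
def isLinearStructure {n : ℕ} (g : (Fin n → ZMod 2) → ZMod 2)
    (b : Fin n → ZMod 2) : Prop :=
  (∀ x, g x + g (x + b) = 0) ∨ (∀ x, g x + g (x + b) = 1)

namespace SB

inductive T where
  | leaf (z : ℤ) : T
  | node (l r : T) : T

def T.add : T → T → T
  | .leaf a, .leaf b => .leaf (a + b)
  | .node l r, .node l' r' => .node (T.add l l') (T.add r r')
  | _, _ => .leaf 0

def T.sub : T → T → T
  | .leaf a, .leaf b => .leaf (a - b)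
  | .node l r, .node l' r' => .node (T.sub l l') (T.sub r r')
  | _, _ => .leaf 0

def toTree : (n : ℕ) → ((Fin n → ZMod 2) → ℤ) → T
  | 0, g => .leaf (g Fin.elim0)
  | n + 1, g => .node (toTree n fun x => g (Fin.cons 0 x)) (toTree n fun x => g (Fin.cons 1 x))

def chk (lam : ℤ) : ℕ → T → Bool
  | 0, .leaf z => z == 0 || z == lam || z == -lam
  | n + 1, .node l r => chk lam n (T.add l r) && chk lam n (T.sub l r)
  | _, _ => false

theorem toTree_add (n : ℕ) (g h : (Fin n → ZMod 2) → ℤ) :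
    T.add (toTree n g) (toTree n h) = toTree n (fun x => g x + h x) := by
  induction n with
  | zero => rfl
  | succ n ih => simp only [toTree, T.add, ih]

theorem toTree_sub (n : ℕ) (g h : (Fin n → ZMod 2) → ℤ) :
    T.sub (toTree n g) (toTree n h) = toTree n (fun x => g x - h x) := by
  induction n with
  | zero => rfl
  | succ n ih => simp only [toTree, T.sub, ih]

def sg (z : ZMod 2) : ℤ := match z with
  | 0 => 1
  | 1 => -1

theorem sg_eq (z : ZMod 2) : (-1 : ℤ) ^ z.val = sg z := by
  revert z; decide

theorem sg_add (z w : ZMod 2) : sg (z + w) = sg z * sg w := by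
  revert z w; decide

def W {n : ℕ} (g : (Fin n → ZMod 2) → ℤ) (a : Fin n → ZMod 2) : ℤ :=
  ∑ x : Fin n → ZMod 2, g x * sg (∑ i, a i * x i)

theorem sum_cons {n : ℕ} (F : (Fin (n + 1) → ZMod 2) → ℤ) :
    ∑ x, F x = ∑ x : Fin n → ZMod 2, F (Fin.cons 0 x) + ∑ x : Fin n → ZMod 2, F (Fin.cons 1 x) := by
  rw [← (Fin.consEquiv (fun _ => ZMod 2)).sum_comp, Fintype.sum_prod_type]
  exact Fin.sum_univ_two (fun i : Fin 2 => ∑ x : Fin n → ZMod 2, F (Fin.cons (i : ZMod 2) x))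

theorem W_cons0 {n : ℕ} (g : (Fin (n + 1) → ZMod 2) → ℤ) (a : Fin n → ZMod 2) :
    W g (Fin.cons 0 a) = W (fun x => g (Fin.cons 0 x) + g (Fin.cons 1 x)) a := by
  unfold W
  rw [sum_cons, ← Finset.sum_add_distrib]
  refine Finset.sum_congr rfl fun x _ => ?_
  simp [Fin.sum_univ_succ]
  ring

theorem W_cons1 {n : ℕ} (g : (Fin (n + 1) → ZMod 2) → ℤ) (a : Fin n → ZMod 2) :
    W g (Fin.cons 1 a) = W (fun x => g (Fin.cons 0 x) - g (Fin.cons 1 x)) a := by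
  unfold W
  rw [sum_cons, ← Finset.sum_add_distrib]
  refine Finset.sum_congr rfl fun x _ => ?_
  have h1 : sg 1 = -1 := rfl
  simp [Fin.sum_univ_succ, sg_add, h1]
  ring

theorem chk_iff (lam : ℤ) (n : ℕ) (g : (Fin n → ZMod 2) → ℤ) :
    chk lam n (toTree n g) = true ↔ ∀ a, W g a = 0 ∨ W g a = lam ∨ W g a = -lam := by
  induction n with
  | zero =>
    have h0 : ∀ a, W g a = g Fin.elim0 := by
      intro a
      have : sg 0 = 1 := rfl
      simp [W, this]
      congr 1
    simp only [h0]
    simp [toTree, chk, or_assoc]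
  | succ n ih =>
    simp only [toTree, chk, toTree_add, toTree_sub, Bool.and_eq_true, ih, ← W_cons0, ← W_cons1]
    constructor
    · rintro ⟨h0, h1⟩ a
      rw [← Fin.cons_self_tail a]
      have : a 0 = 0 ∨ a 0 = 1 := by generalize a 0 = z; revert z; decide
      rcases this with h | h <;> rw [h]
      · exact h0 _
      · exact h1 _
    · intro h
      exact ⟨fun a => h _, fun a => h _⟩

theorem walsh_eq {n : ℕ} (f : (Fin n → ZMod 2) → ZMod 2) (a : Fin n → ZMod 2) :
    walsh f a = W (fun x => sg (f x)) a := by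
  unfold walsh W
  refine Finset.sum_congr rfl fun x _ => ?_
  rw [sg_eq, sg_add]

theorem semiBent_iff {n : ℕ} (f : (Fin n → ZMod 2) → ZMod 2) :
    semiBent f ↔ chk (sbLambda n) n (toTree n fun x => sg (f x)) = true := by
  rw [chk_iff]
  simp only [semiBent, walsh_eq]

/-- quadratic form -/
def qf (q : Fin 6 → ZMod 2) (x : Fin 4 → ZMod 2) : ZMod 2 :=
  q 0 * (x 0 * x 1) + q 1 * (x 0 * x 2) + q 2 * (x 0 * x 3) + q 3 * (x 1 * x 2) +
    q 4 * (x 1 * x 3) + q 5 * (x 2 * x 3)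

def Aff {n : ℕ} (g : (Fin n → ZMod 2) → ZMod 2) : Prop :=
  ∃ (c : ZMod 2) (m : Fin n → ZMod 2), ∀ x, g x = c + ∑ i, m i * x i

theorem Aff.add {n : ℕ} {g h : (Fin n → ZMod 2) → ZMod 2} (hg : Aff g) (hh : Aff h) :
    Aff (fun x => g x + h x) := by
  obtain ⟨c, m, hg⟩ := hg
  obtain ⟨d, k, hh⟩ := hh
  refine ⟨c + d, m + k, fun x => ?_⟩
  simp only [hg, hh, Pi.add_apply, add_mul, Finset.sum_add_distrib]
  ring

theorem Aff.sum {n : ℕ} {ι : Type} (s : Finset ι) (g : ι → (Fin n → ZMod 2) → ZMod 2)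
    (hg : ∀ i, Aff (g i)) : Aff (fun x => ∑ i ∈ s, g i x) := by
  classical
  induction s using Finset.induction_on with
  | empty => exact ⟨0, 0, by simp⟩
  | insert a s ha ih =>
    simp only [Finset.sum_insert ha]
    exact (hg a).add ih

theorem Aff.const {n : ℕ} (c : ZMod 2) : Aff (fun _ : Fin n → ZMod 2 => c) :=
  ⟨c, 0, by simp⟩

theorem Aff.coord {n : ℕ} (c : ZMod 2) (j : Fin n) : Aff (fun x : Fin n → ZMod 2 => c * x j) :=
  ⟨0, Pi.single j c, by simp [Pi.single_apply]⟩

theorem Aff.caStar {n : ℕ} (h : 4 ≤ n) {g : (Fin 4 → ZMod 2) → ZMod 2} (hg : Aff g) :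
    Aff (caStar 4 n h g) := by
  obtain ⟨c, m, hg⟩ := hg
  unfold _root_.caStar
  refine Aff.sum _ _ fun i => ?_
  simp only [hg]
  exact (Aff.const c).add (Aff.sum _ _ fun j => Aff.coord _ _)

theorem caStar_add {n : ℕ} (h : 4 ≤ n) (f g : (Fin 4 → ZMod 2) → ZMod 2) (x : Fin n → ZMod 2) :
    caStar 4 n h (fun y => f y + g y) x = caStar 4 n h f x + caStar 4 n h g x := by
  simp only [caStar, Finset.sum_add_distrib]

theorem semiBent_aff {n : ℕ} (f g : (Fin n → ZMod 2) → ZMod 2) (hg : Aff g)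
    (h : semiBent (fun x => f x + g x)) : semiBent f := by
  obtain ⟨c, m, hg⟩ := hg
  intro a
  have key : walsh (fun x => f x + g x) (a + m) = sg c * walsh f a := by
    rw [walsh_eq, walsh_eq]
    unfold W
    rw [Finset.mul_sum]
    refine Finset.sum_congr rfl fun x _ => ?_
    simp only [hg, Pi.add_apply, add_mul, Finset.sum_add_distrib, sg_add]
    have : ∀ z, sg z * sg z = 1 := by decide
    linear_combination (sg (f x) * sg c * sg (∑ i, a i * x i)) * this (∑ i, m i * x i)
  have h2 := h (a + m)
  rw [key] at h2
  have : sg c = 1 ∨ sg c = -1 := by clear * -; revert c; decide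
  rcases this with h | h <;> rw [h] at h2
  · simpa using h2
  · rcases h2 with h2 | h2 | h2
    · left; linarith
    · right; right; linarith
    · right; left; linarith

theorem moebius (f : (Fin 4 → ZMod 2) → ZMod 2) (x : Fin 4 → ZMod 2) :
    f x = ∑ I : Finset (Fin 4), anf f I * ∏ i ∈ I, x i := by
  have key : ∀ x y : Fin 4 → ZMod 2,
      (∑ I : Finset (Fin 4), (if ∀ i, y i = 1 → i ∈ I then 1 else 0) * ∏ i ∈ I, x i)
        = if y = x then 1 else (0 : ZMod 2) := by
    decide +kernel
  have : ∀ I, anf f I = ∑ y, f y * (if ∀ i, y i = 1 → i ∈ I then 1 else 0) := by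
    intro I
    simp only [anf, Finset.sum_filter, mul_ite, mul_one, mul_zero]
  simp only [this, Finset.sum_mul]
  rw [Finset.sum_comm]
  simp only [mul_assoc, ← Finset.mul_sum, key]
  simp

theorem decomp (f : (Fin 4 → ZMod 2) → ZMod 2) (hf : algDegree f = 2) :
    ∃ q : Fin 6 → ZMod 2, q ≠ 0 ∧ ∃ g, Aff g ∧ f = fun x => qf q x + g x := by
  have hz : ∀ I : Finset (Fin 4), 2 < I.card → anf f I = 0 := by
    intro I hI
    by_contra hne
    have := Finset.le_sup (f := Finset.card)
      (show I ∈ (Finset.univ.filter fun I : Finset (Fin 4) => anf f I ≠ 0) by simpa using hne)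
    unfold algDegree at hf
    omega
  have hnz : ∃ I : Finset (Fin 4), I.card = 2 ∧ anf f I ≠ 0 := by
    have hne : (Finset.univ.filter fun I : Finset (Fin 4) => anf f I ≠ 0).Nonempty := by
      by_contra h
      rw [Finset.not_nonempty_iff_eq_empty] at h
      simp [algDegree, h] at hf
    obtain ⟨I, hI, hc⟩ := Finset.exists_mem_eq_sup _ hne Finset.card
    refine ⟨I, ?_, by simpa using hI⟩
    rw [← hc]; exact hf
  let q : Fin 6 → ZMod 2 := ![anf f {0, 1}, anf f {0, 2}, anf f {0, 3}, anf f {1, 2},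
    anf f {1, 3}, anf f {2, 3}]
  refine ⟨q, ?_, fun x => anf f ∅ + ∑ i, anf f {i} * x i, ⟨_, _, fun x => rfl⟩, ?_⟩
  · obtain ⟨I, hI, hne⟩ := hnz
    intro h0
    apply hne
    have hall : ∀ I : Finset (Fin 4), I.card = 2 → I = {0, 1} ∨ I = {0, 2} ∨ I = {0, 3} ∨ I = {1, 2} ∨
      I = {1, 3} ∨ I = {2, 3} := by decide
    rcases hall I hI with h | h | h | h | h | h <;> rw [h]
    · exact congrFun h0 0
    · exact congrFun h0 1
    · exact congrFun h0 2
    · exact congrFun h0 3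
    · exact congrFun h0 4
    · exact congrFun h0 5
  · funext x
    rw [moebius f x]
    rw [← Finset.sum_filter_of_ne (p := fun I : Finset (Fin 4) => I.card ≤ 2)]
    · have hu : (Finset.univ.filter (fun I : Finset (Fin 4) => I.card ≤ 2)) =
        {∅, {0}, {1}, {2}, {3}, {0, 1}, {0, 2}, {0, 3}, {1, 2}, {1, 3}, {2, 3}} := by decide
      rw [hu]
      repeat rw [Finset.sum_insert (by decide)]
      rw [Finset.sum_singleton]
      repeat rw [Finset.prod_pair (by decide)]
      simp only [Finset.prod_singleton, Finset.prod_empty, qf, q, Fin.sum_univ_four]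
      simp
      ring
    · intro I _ h
      by_contra hI
      apply h
      rw [hz I (by omega), zero_mul]

def bad (q : Fin 6 → ZMod 2) (n : ℕ) (h : 4 ≤ n) : Bool :=
  !chk (sbLambda n) n (toTree n fun x => sg (caStar 4 n h (qf q) x))

theorem upper : ∀ q : Fin 6 → ZMod 2, q ≠ 0 →
    bad q 4 (by decide) || bad q 5 (by decide) || bad q 6 (by decide) ||
    bad q 7 (by decide) || bad q 9 (by decide) := by
  decide +kernel

theorem lower4 : chk (sbLambda 4) 4 (toTree 4 fun x => sg (caStar 4 4 (by decide) (qf ![1,1,0,0,0,0]) x)) = true := by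
  decide +kernel
theorem lower5 : chk (sbLambda 5) 5 (toTree 5 fun x => sg (caStar 4 5 (by decide) (qf ![1,1,0,0,0,0]) x)) = true := by
  decide +kernel
theorem lower6 : chk (sbLambda 6) 6 (toTree 6 fun x => sg (caStar 4 6 (by decide) (qf ![1,1,0,0,0,0]) x)) = true := by
  decide +kernel
theorem lower7 : chk (sbLambda 7) 7 (toTree 7 fun x => sg (caStar 4 7 (by decide) (qf ![1,1,0,0,0,0]) x)) = true := by
  decide +kernel
theorem lower8 : chk (sbLambda 8) 8 (toTree 8 fun x => sg (caStar 4 8 (by decide) (qf ![1,1,0,0,0,0]) x)) = true := by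
  decide +kernel

theorem deg_ex : algDegree (qf ![1,1,0,0,0,0]) = 2 := by decide +kernel

end SB

/-- over all quadratic functions of 4 variables, the largest `N ∈ {4,…,20}`
such that `f*` is semi-bent for all `4 ≤ n ≤ N` equals `8`; in particular no quadratic
4-variable function yields semi-bent functions for all `4 ≤ n ≤ 20`. -/
theorem quadratic4_max_semibent_range :
    IsGreatest {N : ℕ | 4 ≤ N ∧ N ≤ 20 ∧
      ∃ f : (Fin 4 → ZMod 2) → ZMod 2, algDegree f = 2 ∧
        ∀ n (h : 4 ≤ n), n ≤ N → semiBent (caStar 4 n h f)} 8 ∧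
    ¬ ∃ f : (Fin 4 → ZMod 2) → ZMod 2, algDegree f = 2 ∧
        ∀ n (h : 4 ≤ n), n ≤ 20 → semiBent (caStar 4 n h f) := by
  have main : ∀ N, 9 ≤ N → ∀ f : (Fin 4 → ZMod 2) → ZMod 2, algDegree f = 2 →
      ¬ ∀ n (h : 4 ≤ n), n ≤ N → semiBent (caStar 4 n h f) := by
    intro N hN f hf hs
    obtain ⟨q, hq, g, hg, rfl⟩ := SB.decomp f hf
    have hgood : ∀ n (h : 4 ≤ n), n ≤ N → SB.bad q n h = false := by
      intro n h hn
      have h1 := hs n h hn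
      have h2 : semiBent (caStar 4 n h (SB.qf q)) := by
        refine SB.semiBent_aff _ _ (hg.caStar h) ?_
        have he : caStar 4 n h (fun x => SB.qf q x + g x) =
            fun x => caStar 4 n h (SB.qf q) x + caStar 4 n h g x :=
          funext fun x => SB.caStar_add h _ _ x
        rw [← he]
        exact h1
      rw [SB.semiBent_iff] at h2
      simp [SB.bad, h2]
    have hb := SB.upper q hq
    rw [hgood 4 _ (by omega), hgood 5 _ (by omega), hgood 6 _ (by omega), hgood 7 _ (by omega),
      hgood 9 _ (by omega)] at hb
    simp at hb
  refine ⟨⟨⟨by norm_num, by norm_num, SB.qf ![1, 1, 0, 0, 0, 0], SB.deg_ex, ?_⟩, ?_⟩, ?_⟩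
  · intro n h hn
    rw [SB.semiBent_iff]
    interval_cases n
    · exact SB.lower4
    · exact SB.lower5
    · exact SB.lower6
    · exact SB.lower7
    · exact SB.lower8
  · rintro N ⟨_, _, f, hf, hs⟩
    by_contra hN
    exact main N (by omega) f hf hs
  · rintro ⟨f, hf, hs⟩
    exact main 20 (by norm_num) f hf hs
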